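/- Let n ≥ 1, ε ∈ (0,1], τ ∈ [0,1), and let G = (V,E) be a finite simple graph with c(G) ≤ |E|²·(1−τ)²ε²/(16·√n). Let P be a probability vector on [n] with ∑_i |P i − 1/n| ≥ ε that additionally satisfies |E|·(μ(P) − μ(P)²) < c(G)·(γ(P) − μ(P)²), and let T = |E|·(1+τε²)/n. Then the probability that the collision count Z satisfies Z < T is at most 1/4. -/

import Mathlib

open Finset

open Classical in
/-- Probability of the event `A` under the product distribution on `Ω = V → Fin n`,
where the coordinates are independent and each has law the probability vector `P`. -/
noncomputable def pr {V : Type*} [Fintype V] [DecidableEq V] {n : ℕ}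
    (P : Fin n → ℝ) (A : (V → Fin n) → Prop) : ℝ :=
  ∑ ω : V → Fin n, if A ω then ∏ v, P (ω v) else 0

/-- Expectation of `f` under the product distribution. -/
noncomputable def ex {V : Type*} [Fintype V] [DecidableEq V] {n : ℕ}
    (P : Fin n → ℝ) (f : (V → Fin n) → ℝ) : ℝ :=
  ∑ ω : V → Fin n, (∏ v, P (ω v)) * f ω

/-- Variance of `f` under the product distribution. -/
noncomputable def var {V : Type*} [Fintype V] [DecidableEq V] {n : ℕ}
    (P : Fin n → ℝ) (f : (V → Fin n) → ℝ) : ℝ :=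
  ex P (fun ω => (f ω - ex P f) ^ 2)

/-- The collision count `Z(ω) = ∑_{{u,v} ∈ E} 1[ω u = ω v]`. -/
noncomputable def collisions {V : Type*} [Fintype V] [DecidableEq V] {n : ℕ}
    (G : SimpleGraph V) [DecidableRel G.Adj] (ω : V → Fin n) : ℝ :=
  ∑ e ∈ G.edgeFinset,
    Sym2.lift ⟨fun u v => if ω u = ω v then (1 : ℝ) else 0,
      fun u v => by by_cases h : ω u = ω v <;> simp [h, eq_comm]⟩ e

/-- The number of edges `|E|` of the comparison graph. -/
def edgeCount {V : Type*} [Fintype V] [DecidableEq V]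
    (G : SimpleGraph V) [DecidableRel G.Adj] : ℕ :=
  G.edgeFinset.card

/-- The number of ordered 2-paths `c(G) = ∑_v d(v)·(d(v) − 1)`. -/
def twoPaths {V : Type*} [Fintype V]
    (G : SimpleGraph V) [DecidableRel G.Adj] : ℕ :=
  ∑ v, G.degree v * (G.degree v - 1)

section ProductMeasure

variable {V : Type*} [Fintype V] [DecidableEq V] {n : ℕ} {P : Fin n → ℝ}

lemma ex_const (hP1 : ∑ i, P i = 1) (c : ℝ) : ex P (fun _ : V → Fin n => c) = c := by
  have h : ∑ ω : V → Fin n, ∏ v, P (ω v) = 1 := by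
    simpa [hP1] using (Fintype.prod_sum (fun (_ : V) i => P i)).symm
  rw [ex, ← Finset.sum_mul, h, one_mul]

lemma prod_update_mul (ω : V → Fin n) (u : V) (i : Fin n) :
    (∏ v, P (Function.update ω u i v)) * P (ω u) = (∏ v, P (ω v)) * P i := by
  rw [← Finset.mul_prod_erase univ (fun v => P (Function.update ω u i v)) (mem_univ u),
    ← Finset.mul_prod_erase univ (fun v => P (ω v)) (mem_univ u)]
  have h : ∏ v ∈ univ.erase u, P (Function.update ω u i v) = ∏ v ∈ univ.erase u, P (ω v) :=
    Finset.prod_congr rfl fun v hv => by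
      rw [Function.update_of_ne (Finset.ne_of_mem_erase hv)]
  rw [h, Function.update_self]
  ring

/-- Resampling a single coordinate does not change the expectation. -/
lemma ex_resample (hP1 : ∑ i, P i = 1) (u : V) (f : (V → Fin n) → ℝ) :
    ex P f = ex P (fun ω => ∑ i, P i * f (Function.update ω u i)) := by
  have hinv : Function.Involutive
      (fun p : (V → Fin n) × Fin n => (Function.update p.1 u p.2, p.1 u)) := by
    rintro ⟨ω, i⟩
    simp
  have h := Equiv.sum_comp hinv.toPerm (fun p => (∏ v, P (p.1 v)) * P p.2 * f p.1)
  simp only [Function.Involutive.coe_toPerm, prod_update_mul, Fintype.sum_prod_type] at h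
  simp only [ex, Finset.mul_sum]
  calc ∑ ω : V → Fin n, (∏ v, P (ω v)) * f ω
      = ∑ ω : V → Fin n, ∑ i, (∏ v, P (ω v)) * P i * f ω := by
        refine Finset.sum_congr rfl fun ω _ => ?_
        rw [← Finset.sum_mul, ← Finset.mul_sum, hP1, mul_one]
    _ = _ := by
        rw [← h]
        simp only [mul_assoc]

lemma ex_coord (hP1 : ∑ i, P i = 1) (u : V) (g : Fin n → ℝ) :
    ex P (fun ω : V → Fin n => g (ω u)) = ∑ i, P i * g i := by
  rw [ex_resample hP1 u]
  simp only [Function.update_self]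
  exact ex_const hP1 _

/-- The expectation of a product of functions of two distinct coordinates factors. -/
lemma ex_coord_mul (hP1 : ∑ i, P i = 1) {u v : V} (huv : u ≠ v) (g h : Fin n → ℝ) :
    ex P (fun ω : V → Fin n => g (ω u) * h (ω v)) = (∑ i, P i * g i) * ∑ i, P i * h i := by
  rw [ex_resample hP1 v]
  simp only [Function.update_self, Function.update_of_ne huv]
  rw [← ex_coord hP1 u, ex, ex, Finset.sum_mul]
  refine Finset.sum_congr rfl fun ω _ => ?_
  rw [mul_assoc, Finset.mul_sum (f := fun i => P i * h i)]
  congr 1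
  exact Finset.sum_congr rfl fun i _ => by ring

end ProductMeasure

/-- The centered collision indicator of the pair `u`, `v`. -/
noncomputable def collisionDev {V : Type*} {n : ℕ} (P : Fin n → ℝ) (u v : V) (ω : V → Fin n) : ℝ :=
  (if ω u = ω v then 1 else 0) - ∑ i, P i ^ 2

lemma collisionDev_comm {V : Type*} {n : ℕ} {P : Fin n → ℝ} (u v : V) :
    collisionDev P u v = collisionDev P v u := by
  funext ω
  simp only [collisionDev, eq_comm]

section Covariance

variable {V : Type*} [Fintype V] [DecidableEq V] {n : ℕ} {P : Fin n → ℝ}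

/-- Averaging the centered collision indicator over one of its endpoints. -/
lemma ex_collisionDev_mul (hP1 : ∑ i, P i = 1) {u v : V} (huv : u ≠ v)
    (f : (V → Fin n) → ℝ) (hf : ∀ ω i, f (Function.update ω v i) = f ω) :
    ex P (fun ω => collisionDev P u v ω * f ω)
      = ex P (fun ω => (P (ω u) - ∑ i, P i ^ 2) * f ω) := by
  rw [ex_resample hP1 v]
  congr 1
  funext ω
  simp only [collisionDev, hf, Function.update_self, Function.update_of_ne huv, ← mul_assoc]
  rw [← Finset.sum_mul]
  congr 1
  simp only [mul_sub, Finset.sum_sub_distrib, ← Finset.sum_mul, hP1]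
  simp

lemma sum_mul_sub_collision (hP1 : ∑ i, P i = 1) :
    ∑ i, P i * (P i - ∑ j, P j ^ 2) = 0 := by
  simp only [mul_sub, Finset.sum_sub_distrib, ← Finset.sum_mul, hP1, ← pow_two]
  simp

lemma ex_collisionDev_sq (hP1 : ∑ i, P i = 1) {u v : V} (huv : u ≠ v) :
    ex P (fun ω => collisionDev P u v ω * collisionDev P u v ω)
      = ∑ i, P i ^ 2 - (∑ i, P i ^ 2) ^ 2 := by
  set m := ∑ i, P i ^ 2 with hm
  have h : (fun ω : V → Fin n => collisionDev P u v ω * collisionDev P u v ω)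
      = fun ω => collisionDev P u v ω * (1 - 2 * m) + (m - m ^ 2) := by
    funext ω
    by_cases h : ω u = ω v <;> simp [collisionDev, h, ← hm] <;> ring
  have hadd : ex P (fun ω => collisionDev P u v ω * (1 - 2 * m) + (m - m ^ 2))
      = ex P (fun ω => collisionDev P u v ω * (1 - 2 * m))
        + ex P (fun _ : V → Fin n => m - m ^ 2) := by
    simp only [ex, mul_add, Finset.sum_add_distrib]
  rw [h, hadd, ex_const hP1, ex_collisionDev_mul hP1 huv _ (fun _ _ => rfl),
    ex_coord hP1 u (fun i => (P i - m) * (1 - 2 * m))]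
  simp only [← mul_assoc]
  rw [← Finset.sum_mul, sum_mul_sub_collision hP1]
  ring

lemma ex_collisionDev_path (hP1 : ∑ i, P i = 1) {u v w : V} (huv : u ≠ v) (huw : u ≠ w)
    (hvw : v ≠ w) :
    ex P (fun ω => collisionDev P u v ω * collisionDev P u w ω)
      = ∑ i, P i ^ 3 - (∑ i, P i ^ 2) ^ 2 := by
  rw [ex_collisionDev_mul hP1 huv _ (fun ω i => by
    simp [collisionDev, Function.update_of_ne huv, Function.update_of_ne hvw.symm])]
  simp only [mul_comm _ (collisionDev P u w _)]
  rw [ex_collisionDev_mul hP1 huw _ (fun ω i => by simp [Function.update_of_ne huw]),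
    ex_coord hP1 u (fun i => (P i - ∑ j, P j ^ 2) * (P i - ∑ j, P j ^ 2))]
  set m := ∑ i, P i ^ 2 with hm
  have h : ∀ i, P i * ((P i - m) * (P i - m)) = P i ^ 3 - 2 * m * P i ^ 2 + m ^ 2 * P i :=
    fun i => by ring
  simp only [h, Finset.sum_add_distrib, Finset.sum_sub_distrib, ← Finset.mul_sum, hP1, ← hm]
  ring

lemma ex_collisionDev_disjoint (hP1 : ∑ i, P i = 1) {u v x y : V} (huv : u ≠ v) (hux : u ≠ x)
    (hvx : v ≠ x) (hvy : v ≠ y) (huy : u ≠ y) (hxy : x ≠ y) :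
    ex P (fun ω => collisionDev P u v ω * collisionDev P x y ω) = 0 := by
  rw [ex_collisionDev_mul hP1 huv _ (fun ω i => by
    simp [collisionDev, Function.update_of_ne hvx.symm, Function.update_of_ne hvy.symm])]
  simp only [mul_comm _ (collisionDev P x y _)]
  rw [ex_collisionDev_mul hP1 hxy _ (fun ω i => by simp [Function.update_of_ne huy]),
    ex_coord_mul hP1 hux.symm (fun i => P i - ∑ j, P j ^ 2) (fun i => P i - ∑ j, P j ^ 2),
    sum_mul_sub_collision hP1, zero_mul]

/-- The covariance of two collision indicators, as a combination of incidence indicators. -/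
lemma ex_collisionDev_mul_collisionDev (hP1 : ∑ i, P i = 1) {u v x y : V} (huv : u ≠ v)
    (hxy : x ≠ y) :
    ex P (fun ω => collisionDev P u v ω * collisionDev P x y ω)
      = ((if u = x then 1 else 0) + (if u = y then 1 else 0) + (if v = x then 1 else 0)
          + (if v = y then 1 else 0)) * (∑ i, P i ^ 3 - (∑ i, P i ^ 2) ^ 2)
        + ((if u = x then if v = y then 1 else 0 else 0)
          + (if u = y then if v = x then 1 else 0 else 0))
          * ((∑ i, P i ^ 2 - (∑ i, P i ^ 2) ^ 2)
            - 2 * (∑ i, P i ^ 3 - (∑ i, P i ^ 2) ^ 2)) := by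
  by_cases hux : u = x
  · subst hux
    by_cases hvy : v = y
    · subst hvy
      rw [ex_collisionDev_sq hP1 huv]
      simp [huv, huv.symm]
      ring
    · rw [ex_collisionDev_path hP1 huv hxy hvy]
      simp [huv.symm, hxy, hvy]
  by_cases huy : u = y
  · subst huy
    rw [collisionDev_comm x u]
    by_cases hvx : v = x
    · subst hvx
      rw [ex_collisionDev_sq hP1 huv]
      simp [huv, huv.symm]
      ring
    · rw [ex_collisionDev_path hP1 huv hxy.symm hvx]
      simp [huv.symm, hux, hvx]
  by_cases hvx : v = x
  · subst hvx
    rw [collisionDev_comm u v, ex_collisionDev_path hP1 huv.symm hxy huy]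
    simp [huv, huy, hxy]
  by_cases hvy : v = y
  · subst hvy
    rw [collisionDev_comm u v, collisionDev_comm x v,
      ex_collisionDev_path hP1 huv.symm hxy.symm hux]
    simp [huv, hux, hvx]
  rw [ex_collisionDev_disjoint hP1 huv hux hvx hvy huy hxy]
  simp [hux, huy, hvx, hvy]

end Covariance

section Variance

variable {V : Type*} [Fintype V]

/-- Summing a symmetric function over ordered adjacent pairs counts every edge twice. -/
lemma two_mul_sum_edgeFinset_lift [DecidableEq V] (G : SimpleGraph V) [DecidableRel G.Adj]
    (f : {f : V → V → ℝ // ∀ u v, f u v = f v u}) :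
    2 * ∑ e ∈ G.edgeFinset, Sym2.lift f e
      = ∑ u, ∑ v, G.adjMatrix ℝ u v * f.1 u v := by
  have hdart : ∑ d : G.Dart, Sym2.lift f d.edge = 2 * ∑ e ∈ G.edgeFinset, Sym2.lift f e := by
    rw [← Finset.sum_fiberwise_of_maps_to (t := G.edgeFinset) (g := SimpleGraph.Dart.edge)
      (fun d _ => by simp), Finset.mul_sum]
    refine Finset.sum_congr rfl fun e he => ?_
    rw [Finset.sum_congr rfl (g := fun _ => Sym2.lift f e)
      (fun d hd => by rw [(Finset.mem_filter.mp hd).2]), Finset.sum_const,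
      G.dart_edge_fiber_card e (by simpa using he)]
    simp
  rw [← hdart, ← Fintype.sum_prod_type' (fun u v => G.adjMatrix ℝ u v * f.1 u v)]
  simp only [SimpleGraph.adjMatrix_apply, ite_mul, one_mul, zero_mul]
  rw [← Finset.sum_filter]
  refine Finset.sum_bij (fun d _ => d.toProd) (fun d _ => by simp)
    (fun d _ d' _ h => SimpleGraph.Dart.ext _ _ h) (fun p hp => ?_) (fun d _ => rfl)
  exact ⟨⟨p, by simpa using hp⟩, mem_univ _, rfl⟩

lemma sum_adjMatrix_row (G : SimpleGraph V) [DecidableRel G.Adj] (u : V) :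
    ∑ v, G.adjMatrix ℝ u v = G.degree u := by
  simp [SimpleGraph.adjMatrix_apply, ← G.card_neighborFinset_eq_degree,
    G.neighborFinset_eq_filter]

lemma sum_adjMatrix_col (G : SimpleGraph V) [DecidableRel G.Adj] (v : V) :
    ∑ u, G.adjMatrix ℝ u v = G.degree v := by
  simp [SimpleGraph.adjMatrix_apply, G.adj_comm _ v, ← G.card_neighborFinset_eq_degree,
    G.neighborFinset_eq_filter]

lemma sum_degree_eq_two_mul_edgeCount [DecidableEq V] (G : SimpleGraph V)
    [DecidableRel G.Adj] : ∑ v, (G.degree v : ℝ) = 2 * edgeCount G := by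
  rw [edgeCount]
  exact_mod_cast G.sum_degrees_eq_twice_card_edges

lemma sum_degree_sq_eq [DecidableEq V] (G : SimpleGraph V) [DecidableRel G.Adj] :
    ∑ v, (G.degree v : ℝ) ^ 2 = twoPaths G + 2 * edgeCount G := by
  rw [← sum_degree_eq_two_mul_edgeCount, twoPaths]
  push_cast
  rw [← Finset.sum_add_distrib]
  refine Finset.sum_congr rfl fun v _ => ?_
  rcases Nat.eq_zero_or_pos (G.degree v) with h | h
  · simp [h]
  · rw [Nat.cast_sub h]
    push_cast
    ring

lemma sum_adjMatrix_incidence [DecidableEq V] (G : SimpleGraph V) [DecidableRel G.Adj]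
    (u v : V) (K L : ℝ) :
    ∑ x, ∑ y, G.adjMatrix ℝ x y *
      (((if u = x then 1 else 0) + (if u = y then 1 else 0) + (if v = x then 1 else 0)
          + (if v = y then 1 else 0)) * K
        + ((if u = x then if v = y then 1 else 0 else 0)
          + (if u = y then if v = x then 1 else 0 else 0)) * L)
      = 2 * (G.degree u + G.degree v) * K + 2 * G.adjMatrix ℝ u v * L := by
  have hrow (w : V) : ∑ x, (∑ y, G.adjMatrix ℝ x y) * (if w = x then 1 else 0)
      = G.degree w := by
    simp only [mul_ite, mul_one, mul_zero, Finset.sum_ite_eq, mem_univ, if_true,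
      sum_adjMatrix_row]
  have hcol (w : V) : ∑ x, ∑ y, G.adjMatrix ℝ x y * (if w = y then 1 else 0) = G.degree w := by
    simp only [mul_ite, mul_one, mul_zero, Finset.sum_ite_eq, mem_univ, if_true,
      sum_adjMatrix_col]
  have hedge : ∑ x, ∑ y, G.adjMatrix ℝ x y * (if u = x then if v = y then 1 else 0 else 0)
      = G.adjMatrix ℝ u v := by
    rw [Finset.sum_eq_single u, Finset.sum_eq_single v] <;> simp +contextual [eq_comm]
  have hedge' : ∑ x, ∑ y, G.adjMatrix ℝ x y * (if u = y then if v = x then 1 else 0 else 0)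
      = G.adjMatrix ℝ u v := by
    rw [Finset.sum_eq_single v, Finset.sum_eq_single u] <;>
      simp +contextual [eq_comm, SimpleGraph.adjMatrix_apply, G.adj_comm v u]
  simp only [mul_add, ← mul_assoc, add_mul, Finset.sum_add_distrib]
  simp only [← Finset.sum_mul, hrow, hcol, hedge, hedge']
  ring

lemma sum_adjMatrix_mul_degree [DecidableEq V] (G : SimpleGraph V) [DecidableRel G.Adj]
    (K L : ℝ) :
    ∑ u, ∑ v, G.adjMatrix ℝ u v *
        (2 * (G.degree u + G.degree v) * K + 2 * G.adjMatrix ℝ u v * L)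
      = 4 * (twoPaths G + 2 * edgeCount G) * K + 4 * edgeCount G * L := by
  have hsq (u v : V) : G.adjMatrix ℝ u v * G.adjMatrix ℝ u v = G.adjMatrix ℝ u v := by
    simp [SimpleGraph.adjMatrix_apply]
  have hfst : ∑ u, (∑ v, G.adjMatrix ℝ u v) * G.degree u
      = twoPaths G + 2 * edgeCount G := by
    simp only [sum_adjMatrix_row, ← pow_two, sum_degree_sq_eq]
  have hsnd : ∑ u, ∑ v, G.adjMatrix ℝ u v * G.degree v = twoPaths G + 2 * edgeCount G := by
    rw [Finset.sum_comm]
    simp only [← Finset.sum_mul, sum_adjMatrix_col, ← pow_two, sum_degree_sq_eq]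
  have hsum : ∑ u, ∑ v, G.adjMatrix ℝ u v = 2 * edgeCount G := by
    simp only [sum_adjMatrix_row, sum_degree_eq_two_mul_edgeCount]
  have hterm (u v : V) : G.adjMatrix ℝ u v *
        (2 * (G.degree u + G.degree v) * K + 2 * G.adjMatrix ℝ u v * L)
      = G.adjMatrix ℝ u v * G.degree u * (2 * K) + G.adjMatrix ℝ u v * G.degree v * (2 * K)
        + G.adjMatrix ℝ u v * (2 * L) := by
    linear_combination 2 * L * hsq u v
  simp only [hterm, Finset.sum_add_distrib, ← Finset.sum_mul, hfst, hsnd, hsum]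
  ring

lemma two_mul_collisions_sub [DecidableEq V] {n : ℕ} (P : Fin n → ℝ) (G : SimpleGraph V)
    [DecidableRel G.Adj] (ω : V → Fin n) :
    2 * (collisions G ω - edgeCount G * ∑ i, P i ^ 2)
      = ∑ u, ∑ v, G.adjMatrix ℝ u v * collisionDev P u v ω := by
  have hsum : ∑ u, ∑ v, G.adjMatrix ℝ u v = 2 * edgeCount G := by
    simp only [sum_adjMatrix_row, sum_degree_eq_two_mul_edgeCount]
  rw [mul_sub, collisions, two_mul_sum_edgeFinset_lift]
  simp only [collisionDev, mul_sub, Finset.sum_sub_distrib, ← Finset.sum_mul, hsum, mul_assoc]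

lemma ex_sum [DecidableEq V] {n : ℕ} {ι : Type*} (P : Fin n → ℝ) (s : Finset ι)
    (f : ι → (V → Fin n) → ℝ) :
    ex P (fun ω => ∑ j ∈ s, f j ω) = ∑ j ∈ s, ex P (f j) := by
  simp only [ex, Finset.mul_sum]
  exact Finset.sum_comm

lemma ex_const_mul [DecidableEq V] {n : ℕ} (P : Fin n → ℝ) (c : ℝ) (f : (V → Fin n) → ℝ) :
    ex P (fun ω => c * f ω) = c * ex P f := by
  simp only [ex, Finset.mul_sum]
  exact Finset.sum_congr rfl fun ω _ => by ring

/-- The second moment of the collision count around `|E|·μ`. -/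
lemma ex_collisions_sub_sq [DecidableEq V] {n : ℕ} {P : Fin n → ℝ} (hP1 : ∑ i, P i = 1)
    (G : SimpleGraph V) [DecidableRel G.Adj] :
    ex P (fun ω : V → Fin n => (collisions G ω - edgeCount G * ∑ i, P i ^ 2) ^ 2)
      = edgeCount G * (∑ i, P i ^ 2 - (∑ i, P i ^ 2) ^ 2)
        + twoPaths G * (∑ i, P i ^ 3 - (∑ i, P i ^ 2) ^ 2) := by
  have hexp (ω : V → Fin n) : 4 * (collisions G ω - edgeCount G * ∑ i, P i ^ 2) ^ 2
      = ∑ u, ∑ v, ∑ x, ∑ y, G.adjMatrix ℝ u v * (G.adjMatrix ℝ x y *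
          (collisionDev P u v ω * collisionDev P x y ω)) := by
    have h : 4 * (collisions G ω - edgeCount G * ∑ i, P i ^ 2) ^ 2
        = (2 * (collisions G ω - edgeCount G * ∑ i, P i ^ 2))
          * (2 * (collisions G ω - edgeCount G * ∑ i, P i ^ 2)) := by ring
    rw [h, two_mul_collisions_sub]
    simp only [Finset.sum_mul, Finset.mul_sum]
    refine Finset.sum_congr rfl fun u _ => Finset.sum_congr rfl fun v _ =>
      Finset.sum_congr rfl fun x _ => Finset.sum_congr rfl fun y _ => by ring
  have hcov (u v x y : V) : G.adjMatrix ℝ u v * (G.adjMatrix ℝ x y *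
        ex P (fun ω => collisionDev P u v ω * collisionDev P x y ω))
      = G.adjMatrix ℝ u v * (G.adjMatrix ℝ x y *
        (((if u = x then 1 else 0) + (if u = y then 1 else 0) + (if v = x then 1 else 0)
          + (if v = y then 1 else 0)) * (∑ i, P i ^ 3 - (∑ i, P i ^ 2) ^ 2)
        + ((if u = x then if v = y then 1 else 0 else 0)
          + (if u = y then if v = x then 1 else 0 else 0))
          * ((∑ i, P i ^ 2 - (∑ i, P i ^ 2) ^ 2)
            - 2 * (∑ i, P i ^ 3 - (∑ i, P i ^ 2) ^ 2)))) := by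
    by_cases huv : G.Adj u v
    · by_cases hxy : G.Adj x y
      · rw [ex_collisionDev_mul_collisionDev hP1 huv.ne hxy.ne]
      · simp [SimpleGraph.adjMatrix_apply, hxy]
    · simp [SimpleGraph.adjMatrix_apply, huv]
  have h4 := ex_const_mul P 4
    (fun ω : V → Fin n => (collisions G ω - edgeCount G * ∑ i, P i ^ 2) ^ 2)
  simp only [hexp, ex_sum, ex_const_mul, hcov] at h4
  simp only [← Finset.mul_sum, sum_adjMatrix_incidence, sum_adjMatrix_mul_degree] at h4
  linarith

end Variance

/-- Chebyshev's inequality for the lower tail, around an arbitrary centre `m`. -/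
lemma pr_lt_mul_sq_le {V : Type*} [Fintype V] [DecidableEq V] {n : ℕ} {P : Fin n → ℝ}
    (hP0 : ∀ i, 0 ≤ P i) (f : (V → Fin n) → ℝ) {m t : ℝ} (ht : t ≤ m) :
    pr P (fun ω => f ω < t) * (m - t) ^ 2 ≤ ex P (fun ω => (f ω - m) ^ 2) := by
  rw [pr, ex, Finset.sum_mul]
  refine Finset.sum_le_sum fun ω _ => ?_
  have hw : 0 ≤ ∏ v, P (ω v) := Finset.prod_nonneg fun v _ => hP0 _
  split_ifs with h
  · exact mul_le_mul_of_nonneg_left (by nlinarith) hw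
  · rw [zero_mul]
    positivity

section Moments

variable {n : ℕ} {P : Fin n → ℝ}

lemma sum_sub_uniform_sq (hn : 1 ≤ n) (hP1 : ∑ i, P i = 1) :
    ∑ i, (P i - 1 / (n : ℝ)) ^ 2 = ∑ i, P i ^ 2 - 1 / n := by
  have hn0 : (n : ℝ) ≠ 0 := by positivity
  have h (i : Fin n) : (P i - 1 / (n : ℝ)) ^ 2 = P i ^ 2 - 2 / n * P i + (1 / n) ^ 2 := by ring
  simp only [h, Finset.sum_add_distrib, Finset.sum_sub_distrib, ← Finset.mul_sum, hP1,
    Finset.sum_const, Finset.card_univ, Fintype.card_fin, nsmul_eq_mul]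
  field_simp
  ring

lemma sum_sub_uniform_cube (hn : 1 ≤ n) (hP1 : ∑ i, P i = 1) :
    ∑ i, (P i - 1 / (n : ℝ)) ^ 3 = ∑ i, P i ^ 3 - 3 / n * ∑ i, P i ^ 2 + 2 / (n : ℝ) ^ 2 := by
  have hn0 : (n : ℝ) ≠ 0 := by positivity
  have h (i : Fin n) : (P i - 1 / (n : ℝ)) ^ 3
      = P i ^ 3 - 3 / n * P i ^ 2 + 3 / n ^ 2 * P i - (1 / n) ^ 3 := by ring
  simp only [h, Finset.sum_add_distrib, Finset.sum_sub_distrib, ← Finset.mul_sum, hP1,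
    Finset.sum_const, Finset.card_univ, Fintype.card_fin, nsmul_eq_mul]
  field_simp
  ring

lemma sum_cube_le_sqrt_pow {ι : Type*} (s : Finset ι) (x : ι → ℝ) :
    ∑ i ∈ s, x i ^ 3 ≤ √(∑ i ∈ s, x i ^ 2) ^ 3 := by
  set q := ∑ i ∈ s, x i ^ 2 with hq
  have hq0 : 0 ≤ q := Finset.sum_nonneg fun i _ => sq_nonneg _
  calc ∑ i ∈ s, x i ^ 3 ≤ ∑ i ∈ s, √q * x i ^ 2 := by
        refine Finset.sum_le_sum fun i hi => ?_
        have hx : x i ≤ √q := Real.le_sqrt_of_sq_le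
          (Finset.single_le_sum (f := fun i => x i ^ 2) (fun i _ => sq_nonneg _) hi)
        nlinarith [mul_le_mul_of_nonneg_right hx (sq_nonneg (x i))]
    _ = √q ^ 3 := by
        rw [← Finset.mul_sum, ← hq, pow_succ' _ 2, Real.sq_sqrt hq0]

/-- A distribution that is `ε`-far from uniform has collision probability at least
`(1 + ε²)/n`. -/
lemma sq_le_mul_collision_sub_one (hn : 1 ≤ n) (hP1 : ∑ i, P i = 1) {ε : ℝ} (hε0 : 0 ≤ ε)
    (hfar : ε ≤ ∑ i, |P i - 1 / (n : ℝ)|) : ε ^ 2 ≤ n * ∑ i, P i ^ 2 - 1 := by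
  have hn0 : (n : ℝ) ≠ 0 := by positivity
  have h := sq_sum_le_card_mul_sum_sq (s := univ) (f := fun i => |P i - 1 / (n : ℝ)|)
  simp only [sq_abs, sum_sub_uniform_sq hn hP1, Finset.card_univ, Fintype.card_fin, mul_sub,
    mul_one_div_cancel hn0] at h
  exact (pow_le_pow_left₀ hε0 hfar 2).trans h

/-- Bound on `γ - μ²` in terms of the excess `δ = nμ - 1`, for `ε² ≤ δ` and `ε ≤ 1`. -/
lemma sq_mul_triple_sub_sq_le (hn : 1 ≤ n) (hP1 : ∑ i, P i = 1) {ε : ℝ} (hε0 : 0 ≤ ε)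
    (hε1 : ε ≤ 1) (hδ : ε ^ 2 ≤ n * ∑ i, P i ^ 2 - 1) :
    ε ^ 2 * (∑ i, P i ^ 3 - (∑ i, P i ^ 2) ^ 2) * n ^ 2
      ≤ 2 * (n * ∑ i, P i ^ 2 - 1) ^ 2 * √n := by
  have hn1 : (1 : ℝ) ≤ n := by exact_mod_cast hn
  set μ := ∑ i, P i ^ 2 with hμ
  set δ := n * μ - 1 with hδ'
  have hδ0 : 0 ≤ δ := (sq_nonneg ε).trans hδ
  have hcube := sum_cube_le_sqrt_pow univ (fun i => P i - 1 / (n : ℝ))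
  rw [sum_sub_uniform_sq hn hP1, sum_sub_uniform_cube hn hP1, ← hμ] at hcube
  have hdiv : μ - 1 / n = δ / n := by rw [hδ']; field_simp
  rw [hdiv, Real.sqrt_div hδ0, div_pow] at hcube
  set s := √(n : ℝ) with hs
  set r := √δ with hr
  have hs1 : 1 ≤ s := Real.one_le_sqrt.mpr hn1
  have hsn : s ^ 2 = n := Real.sq_sqrt (by positivity)
  have hrδ : r ^ 2 = δ := Real.sq_sqrt hδ0
  have hr0 : 0 ≤ r := Real.sqrt_nonneg _
  have hεr : ε ≤ r := Real.le_sqrt_of_sq_le hδ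
  have hε2r : ε ^ 2 ≤ r := by nlinarith
  have hμeq : μ = (1 + δ) / n := by rw [hδ']; field_simp; ring
  have hkey : (∑ i, P i ^ 3 - μ ^ 2) * n ^ 2 ≤ δ - δ ^ 2 + r ^ 3 * s := by
    have h := mul_le_mul_of_nonneg_right hcube (sq_nonneg (n : ℝ))
    have h1 : (∑ i, P i ^ 3 - 3 / n * μ + 2 / (n : ℝ) ^ 2) * n ^ 2
        = (∑ i, P i ^ 3 - μ ^ 2) * n ^ 2 - (δ - δ ^ 2) := by
      rw [hμeq]
      field_simp
      ring
    have h2 : r ^ 3 / s ^ 3 * (n : ℝ) ^ 2 = r ^ 3 * s := by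
      rw [← hsn]
      field_simp
    linarith
  calc ε ^ 2 * (∑ i, P i ^ 3 - μ ^ 2) * n ^ 2
      ≤ ε ^ 2 * (δ - δ ^ 2 + r ^ 3 * s) := by
        rw [mul_assoc]
        exact mul_le_mul_of_nonneg_left hkey (sq_nonneg ε)
    _ ≤ ε ^ 2 * (δ + r ^ 3 * s) :=
        mul_le_mul_of_nonneg_left (by nlinarith [sq_nonneg δ]) (sq_nonneg ε)
    _ = ε ^ 2 * δ + ε ^ 2 * (r ^ 3 * s) := by ring
    _ ≤ δ * δ + r * (r ^ 3 * s) := by gcongr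
    _ = δ ^ 2 + δ ^ 2 * s := by rw [← hrδ]; ring
    _ ≤ 2 * δ ^ 2 * s := by nlinarith [mul_le_mul_of_nonneg_left hs1 (sq_nonneg δ)]

lemma collision_sq_le_self (hP0 : ∀ i, 0 ≤ P i) (hP1 : ∑ i, P i = 1) :
    (∑ i, P i ^ 2) ^ 2 ≤ ∑ i, P i ^ 2 := by
  have h0 : 0 ≤ ∑ i, P i ^ 2 := Finset.sum_nonneg fun i _ => sq_nonneg _
  have h1 : ∑ i, P i ^ 2 ≤ 1 := by
    rw [← hP1]
    refine Finset.sum_le_sum fun i hi => ?_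
    have := hP1 ▸ Finset.single_le_sum (fun i _ => hP0 i) hi
    nlinarith [hP0 i]
  nlinarith

end Moments

/-- Type-2 far distributions: if `c(G) ≤ |E|²·(1−τ)²ε²/(16√n)`, `P` is ε-far from uniform
and `|E|·(μ − μ²) < c(G)·(γ − μ²)`, then `Pr[Z < T] ≤ 1/4` for `T = |E|·(1+τε²)/n`. -/
theorem far_type_two_case {V : Type*} [Fintype V] [DecidableEq V] (n : ℕ) (hn : 1 ≤ n)
    (ε τ : ℝ) (hε0 : 0 < ε) (hε1 : ε ≤ 1) (hτ0 : 0 ≤ τ) (hτ1 : τ < 1)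
    (G : SimpleGraph V) [DecidableRel G.Adj]
    (hc : (twoPaths G : ℝ)
        ≤ (edgeCount G : ℝ) ^ 2 * (1 - τ) ^ 2 * ε ^ 2 / (16 * Real.sqrt n))
    (P : Fin n → ℝ) (hP0 : ∀ i, 0 ≤ P i) (hP1 : (∑ i, P i) = 1)
    (hfar : ε ≤ ∑ i, |P i - 1 / (n : ℝ)|)
    (htype : (edgeCount G : ℝ) * ((∑ i, (P i) ^ 2) - (∑ i, (P i) ^ 2) ^ 2)
        < (twoPaths G : ℝ) * ((∑ i, (P i) ^ 3) - (∑ i, (P i) ^ 2) ^ 2))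
    (T : ℝ) (hT : T = (edgeCount G : ℝ) * (1 + τ * ε ^ 2) / n) :
    pr P (fun ω : V → Fin n => collisions G ω < T) ≤ 1 / 4 := by
  have hn0 : (0 : ℝ) < n := by exact_mod_cast hn
  have hδ := sq_le_mul_collision_sub_one hn hP1 hε0.le hfar
  have hγ := sq_mul_triple_sub_sq_le hn hP1 hε0.le hε1 hδ
  have hμ := collision_sq_le_self hP0 hP1
  have hsecond := ex_collisions_sub_sq hP1 G
  set μ := ∑ i, P i ^ 2
  set γ := ∑ i, P i ^ 3
  set δ := n * μ - 1 with hδdef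
  set e := (edgeCount G : ℝ)
  set c := (twoPaths G : ℝ)
  have he0 : 0 ≤ e := Nat.cast_nonneg _
  have hc0 : 0 ≤ c := Nat.cast_nonneg _
  have hδ0 : 0 < δ := (pow_pos hε0 2).trans_le hδ
  have hcγ : 0 < c * (γ - μ ^ 2) := (mul_nonneg he0 (sub_nonneg.mpr hμ)).trans_lt htype
  have hγ0 : 0 < γ - μ ^ 2 := pos_of_mul_pos_right hcγ hc0
  have hcpos : 0 < c := pos_of_mul_pos_left hcγ hγ0.le
  have hepos : 0 < e := by
    refine he0.lt_of_ne fun h => ?_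
    rw [← h] at hc
    norm_num at hc
    linarith
  have hτδ : (1 - τ) * δ ≤ δ - τ * ε ^ 2 := by nlinarith
  have hgap : e * ((1 - τ) * δ) / n ≤ e * μ - T := by
    have h : e * μ - T = e * (δ - τ * ε ^ 2) / n := by
      rw [hT, hδdef]
      field_simp
      ring
    rw [h]
    gcongr
  have hgap0 : 0 < e * ((1 - τ) * δ) / n := by
    have := sub_pos.mpr hτ1
    positivity
  have hvar : e * (μ - μ ^ 2) + c * (γ - μ ^ 2) ≤ 1 / 4 * (e * ((1 - τ) * δ) / n) ^ 2 := by
    have hs0 : 0 < √(n : ℝ) := Real.sqrt_pos.mpr hn0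
    calc e * (μ - μ ^ 2) + c * (γ - μ ^ 2)
        ≤ 2 * (c * (γ - μ ^ 2)) := by linarith
      _ ≤ 2 * (e ^ 2 * (1 - τ) ^ 2 * ε ^ 2 / (16 * √n) * (γ - μ ^ 2)) := by gcongr
      _ = e ^ 2 * (1 - τ) ^ 2 / (8 * √n * n ^ 2) * (ε ^ 2 * (γ - μ ^ 2) * n ^ 2) := by
          field_simp
          ring
      _ ≤ e ^ 2 * (1 - τ) ^ 2 / (8 * √n * n ^ 2) * (2 * δ ^ 2 * √n) := by gcongr
      _ = 1 / 4 * (e * ((1 - τ) * δ) / n) ^ 2 := by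
          field_simp
          ring
  have hcheb := pr_lt_mul_sq_le hP0 (fun ω : V → Fin n => collisions G ω)
    (sub_nonneg.mp (hgap0.le.trans hgap))
  rw [hsecond] at hcheb
  have hsq := pow_le_pow_left₀ hgap0.le hgap 2
  refine le_of_mul_le_mul_right ?_ (pow_pos (hgap0.trans_le hgap) 2)
  linarith
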